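/- If ν, z ∈ ℂ with Re ν > −1/2 and Re z > 0, then the modified Bessel function of the second kind satisfies K_ν(z) = ((z/2)^ν √π / Γ(ν + 1/2)) ∫₀^∞ e^{−z cosh φ} (sinh φ)^{2ν} dφ, and equivalently K_ν(z) = ((z/2)^ν √π / Γ(ν + 1/2)) ∫₁^∞ e^{−zt} (t² − 1)^{ν − 1/2} dt. -/

import Mathlib

/-!
Write `J(a, z) = ∫₁^∞ e^{-zt} (t² - 1)^a dt` (`besselKInt`) and
`S(ν, w) = ∑ wⁿ / (n! Γ(n + ν + 1))` (`besselSeries`), so that `I_ν(z) = (z/2)^ν S(ν, z²/4)`. With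
`F(ν, z) = ((z/2)^ν √π / Γ(ν + 1/2)) J(ν - 1/2, z)` (`besselKRep`), everything follows from the
connection formula `2 sin(νπ) F(ν, z) = π (I_{-ν}(z) - I_ν(z))` (`besselKRep_connection`): for
non-integer `ν` divide by the sine, for integer `ν` pass to the limit using continuity of `F` in
`ν`. The `cosh` form of the integral is the substitution `t = cosh φ`.

Both sides of the connection formula are holomorphic in `z` on `Re z > 0` and in `ν` on
`Re ν > -1/2` (for `J` in its order because `u = t² - 1` turns `J` into a Mellin transform), so by
the identity theorem it suffices to treat real `ν = r ∈ (-1/2, 0)` and real `z = x > 0`.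

There, put `c = 2r + 1 ∈ (0, 1)`. Integration by parts shows that `J(r - 1/2, x)`, and termwise
differentiation that `S(r, x²/4)` and `x^{-2r} S(-r, x²/4)`, are first components `f` of solutions
of the first-order system `f' = x^{-c} p`, `p' = x^c f`. The coefficients are integrable at `0`, so
a solution is determined by its limits at `0⁺` (`eq_zero_of_singular_system`). The limits of `f`
and `p` for `J` are a Beta and a Gamma integral (`tendsto_besselKInt_zero`,
`tendsto_rpow_mul_besselKInt`). Comparing limits expresses `J` through the two series
(`besselKInt_eq_of_real`), and the reflection and duplication formulas for `Γ` identify the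
coefficients.
-/

open Filter Set MeasureTheory
open scoped Real Classical

/-- The modified Bessel function of the first kind
`I_ν(z) = Σ_{n=0}^∞ (z/2)^{ν+2n} / (n! Γ(n+ν+1))`, with the principal branch of powers.
(When `ν` is a negative integer the terms with `n + ν + 1 ≤ 0` vanish, since Mathlib's
`Complex.Gamma` vanishes at nonpositive integers, implementing the convention that the sum
starts at `n = -ν`.) -/
noncomputable def besselI (ν z : ℂ) : ℂ :=
  ∑' n : ℕ, (z / 2) ^ (ν + 2 * (n : ℂ)) / ((n.factorial : ℂ) * Complex.Gamma ((n : ℂ) + ν + 1))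

/-- The modified Bessel function of the second kind:
`K_ν = (π / (2 sin (νπ))) (I_{-ν} - I_ν)` for non-integer `ν`, and for integer `ν` the limit
of this expression as the order tends to `ν`. -/

noncomputable def besselK (ν z : ℂ) : ℂ :=
  if ∃ n : ℤ, ν = (n : ℂ) then
    limUnder (nhdsWithin ν {ν}ᶜ)
      (fun μ => ((Real.pi : ℂ) / (2 * Complex.sin (μ * (Real.pi : ℂ)))) *
        (besselI (-μ) z - besselI μ z))
  else ((Real.pi : ℂ) / (2 * Complex.sin (ν * (Real.pi : ℂ)))) * (besselI (-ν) z - besselI ν z)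

/-! ### The power series of `I_ν` -/

/-- The entire function `S(ν, w) = ∑ wⁿ / (n! Γ(n + ν + 1))` of both variables, for which
`I_ν(z) = (z/2)^ν S(ν, z²/4)`. -/
noncomputable def besselSeries (ν w : ℂ) : ℂ :=
  ∑' n : ℕ, w ^ n / ((n.factorial : ℂ) * Complex.Gamma ((n : ℂ) + ν + 1))

/-- `1/Γ(n + ν + 1)` is bounded uniformly in `n` and in `ν` on bounded sets: the recurrence of `Γ`
makes its norm non-increasing in `n` as soon as `n ≥ R`. -/
lemma exists_bound_inv_Gamma (R : ℝ) : ∃ C : ℝ, ∀ ν : ℂ, ‖ν‖ ≤ R → ∀ n : ℕ,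
    ‖(Complex.Gamma ((n : ℂ) + ν + 1))⁻¹‖ ≤ C := by
  have hcont : ∀ n : ℕ, Continuous fun ν : ℂ => (Complex.Gamma ((n : ℂ) + ν + 1))⁻¹ := fun n =>
    Complex.differentiable_one_div_Gamma.continuous.comp (by fun_prop)
  have hC : ∀ n : ℕ, ∃ C : ℝ, ∀ ν ∈ Metric.closedBall (0 : ℂ) R,
      ‖(Complex.Gamma ((n : ℂ) + ν + 1))⁻¹‖ ≤ C := fun n =>
    (isCompact_closedBall (0 : ℂ) R).exists_bound_of_continuousOn (hcont n).continuousOn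
  choose C hC using hC
  obtain ⟨N, hN⟩ := exists_nat_ge R
  refine ⟨∑ k ∈ Finset.range (N + 1), |C k|, ?_⟩
  intro ν hν n
  have hle : ∀ n ≤ N, ‖(Complex.Gamma ((n : ℂ) + ν + 1))⁻¹‖ ≤
      ∑ k ∈ Finset.range (N + 1), |C k| := fun n hn =>
    ((hC n ν (by simpa using hν)).trans (le_abs_self _)).trans
      (Finset.single_le_sum (f := fun k => |C k|) (fun _ _ => abs_nonneg _)
        (by simpa using Nat.lt_succ_of_le hn))
  rcases le_total n N with h | h
  · exact hle n h
  · induction n, h using Nat.le_induction with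
    | base => exact hle N le_rfl
    | succ n hn ih =>
      refine le_trans ?_ ih
      rw [Complex.one_div_Gamma_eq_self_mul_one_div_Gamma_add_one ((n : ℂ) + ν + 1), norm_mul]
      have h1 : (1 : ℝ) ≤ ‖(n : ℂ) + ν + 1‖ := by
        have h2 : ‖(n : ℂ) + 1‖ ≤ ‖(n : ℂ) + ν + 1‖ + ‖ν‖ := by
          have := norm_sub_le ((n : ℂ) + ν + 1) ν
          rwa [show (n : ℂ) + ν + 1 - ν = n + 1 by ring] at this
        have h3 : ‖(n : ℂ) + 1‖ = n + 1 := by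
          rw [← Nat.cast_add_one, Complex.norm_natCast]; push_cast; ring
        have : (N : ℝ) ≤ n := by exact_mod_cast hn
        linarith
      rw [show ((n + 1 : ℕ) : ℂ) + ν + 1 = (n : ℂ) + ν + 1 + 1 by push_cast; ring]
      exact le_mul_of_one_le_left (norm_nonneg _) h1

lemma norm_besselSeries_term_le {R C ρ : ℝ} (hC : ∀ ν : ℂ, ‖ν‖ ≤ R → ∀ n : ℕ,
    ‖(Complex.Gamma ((n : ℂ) + ν + 1))⁻¹‖ ≤ C) {ν w : ℂ} (hν : ‖ν‖ ≤ R) (hw : ‖w‖ ≤ ρ) (n : ℕ) :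
    ‖w ^ n / ((n.factorial : ℂ) * Complex.Gamma ((n : ℂ) + ν + 1))‖ ≤
      ρ ^ n / n.factorial * C := by
  rw [div_mul_eq_div_div, div_eq_mul_inv _ (Complex.Gamma _), norm_mul, norm_div, norm_pow,
    Complex.norm_natCast]
  have hρ : 0 ≤ ρ := (norm_nonneg w).trans hw
  have := hC ν hν n
  gcongr

lemma summable_besselSeries (ν w : ℂ) : Summable fun n : ℕ =>
    w ^ n / ((n.factorial : ℂ) * Complex.Gamma ((n : ℂ) + ν + 1)) := by
  obtain ⟨C, hC⟩ := exists_bound_inv_Gamma ‖ν‖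
  exact Summable.of_norm_bounded ((Real.summable_pow_div_factorial ‖w‖).mul_right C)
    fun n => norm_besselSeries_term_le hC le_rfl le_rfl n

lemma differentiable_besselSeries_order (w : ℂ) : Differentiable ℂ fun ν => besselSeries ν w := by
  intro ν₀
  obtain ⟨C, hC⟩ := exists_bound_inv_Gamma (‖ν₀‖ + 1)
  have h := Complex.differentiableOn_tsum_of_summable_norm
    (F := fun (n : ℕ) (ν : ℂ) => w ^ n / ((n.factorial : ℂ) * Complex.Gamma ((n : ℂ) + ν + 1)))
    (U := Metric.ball ν₀ 1)
    ((Real.summable_pow_div_factorial ‖w‖).mul_right C) (fun n => ?_) Metric.isOpen_ball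
    (fun n ν hν => norm_besselSeries_term_le hC ?_ le_rfl n)
  · exact h.differentiableAt (Metric.ball_mem_nhds _ one_pos)
  · have h2 : Differentiable ℂ fun ν : ℂ => (Complex.Gamma ((n : ℂ) + ν + 1))⁻¹ :=
      Complex.differentiable_one_div_Gamma.comp (by fun_prop)
    simp_rw [div_mul_eq_div_div]
    simp_rw [div_eq_mul_inv _ (Complex.Gamma _)]
    exact (h2.const_mul _).differentiableOn
  · have := norm_sub_norm_le ν ν₀
    rw [Metric.mem_ball, dist_eq_norm] at hν
    linarith

/-- `∂S/∂w (ν, w) = S(ν + 1, w)`. -/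
lemma hasDerivAt_besselSeries (ν w : ℂ) :
    HasDerivAt (besselSeries ν) (besselSeries (ν + 1) w) w := by
  obtain ⟨C, hC⟩ := exists_bound_inv_Gamma ‖ν‖
  have hsum := (Real.summable_pow_div_factorial (‖w‖ + 1)).mul_right C
  have hdiff : ∀ n : ℕ, DifferentiableOn ℂ (fun w : ℂ =>
      w ^ n / ((n.factorial : ℂ) * Complex.Gamma ((n : ℂ) + ν + 1))) (Metric.ball w 1) :=
    fun n => by fun_prop
  have hb : ∀ (n : ℕ) (u : ℂ), u ∈ Metric.ball w 1 →
      ‖u ^ n / ((n.factorial : ℂ) * Complex.Gamma ((n : ℂ) + ν + 1))‖ ≤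
        (‖w‖ + 1) ^ n / n.factorial * C := fun n u hu =>
    norm_besselSeries_term_le hC le_rfl (by
      have := norm_sub_norm_le u w
      rw [Metric.mem_ball, dist_eq_norm] at hu
      linarith) n
  have hw : w ∈ Metric.ball w 1 := Metric.mem_ball_self one_pos
  have h1 := Complex.differentiableOn_tsum_of_summable_norm hsum hdiff Metric.isOpen_ball hb
  have h2 := Complex.hasSum_deriv_of_summable_norm hsum hdiff Metric.isOpen_ball hb hw
  have h3 := (h1.differentiableAt (Metric.ball_mem_nhds w one_pos)).hasDerivAt
  suffices h : besselSeries (ν + 1) w = deriv (fun w : ℂ => ∑' n : ℕ,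
      w ^ n / ((n.factorial : ℂ) * Complex.Gamma ((n : ℂ) + ν + 1))) w by
    rw [h]; exact h3
  have h4 := (hasSum_nat_add_iff' 1).mpr h2
  simp only [Finset.range_one, Finset.sum_singleton, pow_zero, deriv_const, sub_zero] at h4
  rw [← h4.tsum_eq, besselSeries]
  congr 1
  ext n
  have hn : ((n : ℂ) + 1) ≠ 0 := by exact_mod_cast n.succ_ne_zero
  rw [deriv_div_const, deriv_pow_field, Nat.factorial_succ]
  push_cast
  rw [show (n : ℂ) + 1 + ν + 1 = (n : ℂ) + (ν + 1) + 1 by ring,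
    mul_assoc ((n : ℂ) + 1) (n.factorial : ℂ), mul_div_mul_left _ _ hn]

/-- The contiguity relation coming from `Γ(s + 1) = s Γ(s)`. -/
lemma besselSeries_recurrence (ν w : ℂ) :
    w * besselSeries (ν + 2) w + (ν + 1) * besselSeries (ν + 1) w = besselSeries ν w := by
  have h0 := (summable_besselSeries ν w).hasSum
  have h1 := ((summable_besselSeries (ν + 1) w).hasSum).mul_left (ν + 1)
  have h2 := ((summable_besselSeries (ν + 2) w).hasSum).mul_left w
  have h3 := h0.sub h1
  have h4 := (hasSum_nat_add_iff' 1).mpr h3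
  have hz : ∀ n : ℕ, w ^ n / ((n.factorial : ℂ) * Complex.Gamma ((n : ℂ) + ν + 1)) -
      (ν + 1) * (w ^ n / ((n.factorial : ℂ) * Complex.Gamma ((n : ℂ) + (ν + 1) + 1))) =
      n * (w ^ n / ((n.factorial : ℂ) * Complex.Gamma ((n : ℂ) + (ν + 1) + 1))) := by
    intro n
    rw [div_mul_eq_div_div, div_eq_mul_inv _ (Complex.Gamma _),
      Complex.one_div_Gamma_eq_self_mul_one_div_Gamma_add_one ((n : ℂ) + ν + 1),
      div_mul_eq_div_div, div_eq_mul_inv _ (Complex.Gamma _),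
      show (n : ℂ) + (ν + 1) + 1 = (n : ℂ) + ν + 1 + 1 by ring]
    ring
  simp only [hz] at h4
  simp only [Finset.range_one, Finset.sum_singleton, Nat.cast_zero, zero_mul, sub_zero] at h4
  have h5 : HasSum (fun n : ℕ => w * (w ^ n / ((n.factorial : ℂ) *
      Complex.Gamma ((n : ℂ) + (ν + 2) + 1)))) (besselSeries ν w -
        (ν + 1) * besselSeries (ν + 1) w) := by
    refine Eq.subst (motive := fun f => HasSum f _) (funext fun n : ℕ => ?_) h4
    have hn : ((n : ℂ) + 1) ≠ 0 := by exact_mod_cast n.succ_ne_zero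
    rw [Nat.factorial_succ]
    push_cast
    rw [show (n : ℂ) + 1 + (ν + 1) + 1 = (n : ℂ) + (ν + 2) + 1 by ring, pow_succ, mul_assoc,
      ← mul_div_assoc ((n : ℂ) + 1), mul_div_mul_left _ _ hn]
    ring
  have := h5.unique h2
  change _ = w * besselSeries (ν + 2) w at this
  rw [← this]; ring

lemma besselSeries_zero (ν : ℂ) : besselSeries ν 0 = (Complex.Gamma (ν + 1))⁻¹ := by
  rw [besselSeries, tsum_eq_single 0 (fun n hn => by simp [hn])]
  simp

lemma besselI_eq (ν : ℂ) {z : ℂ} (hz : z ≠ 0) :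
    besselI ν z = (z / 2) ^ ν * besselSeries ν (z ^ 2 / 4) := by
  rw [besselI, besselSeries, ← tsum_mul_left]
  congr 1
  ext n
  have h2 : (z / 2) ≠ 0 := div_ne_zero hz two_ne_zero
  rw [Complex.cpow_add _ _ h2, show (2 : ℂ) * n = ((2 * n : ℕ) : ℂ) by push_cast; ring,
    Complex.cpow_natCast, pow_mul, show (z / 2) ^ 2 = z ^ 2 / 4 by ring, mul_div_assoc]

/-! ### The integral `J(a, z)` and its dependence on the order -/

/-- The integral `J(a, z) = ∫₁^∞ e^{-zt} (t² - 1)^a dt`, convergent for `Re a > -1`, `Re z > 0`. -/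
noncomputable def besselKInt (a z : ℂ) : ℂ :=
  ∫ t in Ioi (1 : ℝ), Complex.exp (-z * (t : ℂ)) * ((t : ℂ) ^ 2 - 1) ^ a

/-- The function whose Mellin transform at `a + 1` is `J(a, z)`, through `u = t² - 1`. -/
noncomputable def mellinKernel (z : ℂ) (u : ℝ) : ℂ :=
  Complex.exp (-z * (√(1 + u) : ℝ)) / (2 * (√(1 + u) : ℝ))

lemma continuousOn_mellinKernel (z : ℂ) : ContinuousOn (mellinKernel z) (Ioi 0) := by
  unfold mellinKernel
  refine ContinuousOn.div (by fun_prop) (by fun_prop) fun u hu => ?_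
  have : (0 : ℝ) < √(1 + u) := Real.sqrt_pos.mpr (by have := mem_Ioi.mp hu; linarith)
  exact mul_ne_zero two_ne_zero (by exact_mod_cast this.ne')

lemma norm_mellinKernel_le (z : ℂ) {u : ℝ} (hu : 0 < u) :
    ‖mellinKernel z u‖ ≤ Real.exp (-z.re * √(1 + u)) := by
  have h1 : 1 ≤ √(1 + u) := by rw [Real.one_le_sqrt]; linarith
  rw [mellinKernel, norm_div, Complex.norm_exp]
  have h2 : ‖(2 * (√(1 + u) : ℝ) : ℂ)‖ = 2 * √(1 + u) := by
    rw [norm_mul, Complex.norm_real, Real.norm_of_nonneg (by positivity)]; simp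
  rw [h2]
  refine (div_le_self (Real.exp_pos _).le (by linarith)).trans (le_of_eq ?_)
  congr 1
  simp

lemma mellinKernel_isBigO_top {z : ℂ} (hz : 0 < z.re) (A : ℝ) :
    mellinKernel z =O[atTop] (fun u : ℝ => u ^ (-A)) := by
  have h1 : (fun u : ℝ => Real.exp (-z.re * √u)) =O[atTop] fun u : ℝ => (√u) ^ (-(2 * A)) :=
    ((isLittleO_exp_neg_mul_rpow_atTop hz (-(2 * A))).comp_tendsto
      Real.tendsto_sqrt_atTop).isBigO
  have h2 : mellinKernel z =O[atTop] (fun u : ℝ => Real.exp (-z.re * √u)) := by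
    refine Asymptotics.IsBigO.of_bound 1 ?_
    filter_upwards [eventually_gt_atTop 0] with u hu
    rw [one_mul, Real.norm_of_nonneg (Real.exp_pos _).le]
    refine (norm_mellinKernel_le z hu).trans (Real.exp_le_exp.mpr ?_)
    have : √u ≤ √(1 + u) := Real.sqrt_le_sqrt (by linarith)
    nlinarith
  refine (h2.trans h1).congr' EventuallyEq.rfl ?_
  filter_upwards [eventually_gt_atTop 0] with u hu
  rw [Real.sqrt_eq_rpow, ← Real.rpow_mul hu.le]
  congr 1
  ring

lemma mellinKernel_isBigO_zero {z : ℂ} (hz : 0 < z.re) :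
    mellinKernel z =O[nhdsWithin 0 (Ioi 0)] (fun u : ℝ => u ^ (-(0 : ℝ))) := by
  refine Asymptotics.IsBigO.of_bound 1 ?_
  filter_upwards [self_mem_nhdsWithin] with u hu
  refine (norm_mellinKernel_le z hu).trans ?_
  simp only [neg_zero, Real.rpow_zero, norm_one, mul_one, Real.exp_le_one_iff]
  have := Real.sqrt_nonneg (1 + u)
  nlinarith

lemma image_sq_sub_one : (fun t : ℝ => t ^ 2 - 1) '' Ioi 1 = Ioi 0 := by
  ext u
  simp only [mem_image, mem_Ioi]
  constructor
  · rintro ⟨t, ht, rfl⟩; nlinarith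
  · intro hu
    refine ⟨√(1 + u), ?_, ?_⟩
    · rw [Real.lt_sqrt one_pos.le]; linarith
    · rw [Real.sq_sqrt (by linarith)]; ring

lemma injOn_sq_sub_one : InjOn (fun t : ℝ => t ^ 2 - 1) (Ioi 1) := by
  intro a ha b hb h
  simp only [mem_Ioi] at ha hb
  have h' : a ^ 2 = b ^ 2 := by simpa using h
  exact (sq_eq_sq₀ (by linarith) (by linarith)).mp h'

lemma mellinKernel_subst (a z : ℂ) {t : ℝ} (ht : t ∈ Ioi (1 : ℝ)) :
    |2 * t| • (((t ^ 2 - 1 : ℝ) : ℂ) ^ (a + 1 - 1) • mellinKernel z (t ^ 2 - 1)) =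
      Complex.exp (-z * (t : ℂ)) * ((t : ℂ) ^ 2 - 1) ^ a := by
  have ht0 : (0 : ℝ) < t := by have := mem_Ioi.mp ht; linarith
  have h1 : √(1 + (t ^ 2 - 1)) = t := by
    rw [show 1 + (t ^ 2 - 1) = t ^ 2 by ring, Real.sqrt_sq ht0.le]
  have h2 : (t : ℂ) ≠ 0 := by exact_mod_cast ht0.ne'
  rw [mellinKernel, h1, abs_of_pos (by linarith), Complex.real_smul, smul_eq_mul,
    add_sub_cancel_right]
  push_cast
  field_simp

lemma hasDerivWithinAt_sq_sub_one (t : ℝ) (_ : t ∈ Ioi (1 : ℝ)) :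
    HasDerivWithinAt (fun t : ℝ => t ^ 2 - 1) (2 * t) (Ioi 1) t := by
  simpa using (((hasDerivAt_id t).pow 2).sub_const 1).hasDerivWithinAt

lemma besselKInt_eq_mellin (a z : ℂ) : besselKInt a z = mellin (mellinKernel z) (a + 1) := by
  rw [mellin, ← image_sq_sub_one, integral_image_eq_integral_abs_deriv_smul measurableSet_Ioi
    hasDerivWithinAt_sq_sub_one injOn_sq_sub_one, besselKInt]
  exact (setIntegral_congr_fun measurableSet_Ioi fun t ht => mellinKernel_subst a z ht).symm

lemma integrableOn_besselKInt {a z : ℂ} (ha : -1 < a.re) (hz : 0 < z.re) :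
    IntegrableOn (fun t : ℝ => Complex.exp (-z * (t : ℂ)) * ((t : ℂ) ^ 2 - 1) ^ a) (Ioi 1) := by
  have h : MellinConvergent (mellinKernel z) (a + 1) :=
    mellinConvergent_of_isBigO_rpow (a := a.re + 2) (b := 0)
      ((continuousOn_mellinKernel z).locallyIntegrableOn measurableSet_Ioi)
      (mellinKernel_isBigO_top hz _) (by simp) (mellinKernel_isBigO_zero hz)
      (by simp; linarith)
  rw [MellinConvergent, ← image_sq_sub_one, integrableOn_image_iff_integrableOn_abs_deriv_smul
    measurableSet_Ioi hasDerivWithinAt_sq_sub_one injOn_sq_sub_one] at h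
  exact h.congr_fun (fun t ht => mellinKernel_subst a z ht) measurableSet_Ioi

lemma differentiableAt_besselKInt_order {a z : ℂ} (ha : -1 < a.re) (hz : 0 < z.re) :
    DifferentiableAt ℂ (fun a => besselKInt a z) a := by
  have h : DifferentiableAt ℂ (mellin (mellinKernel z)) (a + 1) :=
    mellin_differentiableAt_of_isBigO_rpow (a := a.re + 2) (b := 0)
      ((continuousOn_mellinKernel z).locallyIntegrableOn measurableSet_Ioi)
      (mellinKernel_isBigO_top hz _) (by simp) (mellinKernel_isBigO_zero hz)
      (by simp; linarith)
  simp_rw [besselKInt_eq_mellin]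
  exact h.comp (f := fun a : ℂ => a + 1) a (by fun_prop)

/-! ### Derivative in the argument and contiguity relations for `J` -/

lemma norm_exp_neg_mul_ofReal (z : ℂ) (t : ℝ) :
    ‖Complex.exp (-z * (t : ℂ))‖ = Real.exp (-z.re * t) := by
  rw [Complex.norm_exp]; simp

lemma integrableOn_mul_besselKInt {a z : ℂ} (ha : -1 < a.re) (hz : 0 < z.re) :
    IntegrableOn (fun t : ℝ => (t : ℂ) * (Complex.exp (-z * (t : ℂ)) * ((t : ℂ) ^ 2 - 1) ^ a))
      (Ioi 1) := by
  have hz2 : 0 < (z / 2).re := by simpa using hz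
  have h1 := (integrableOn_besselKInt ha hz2).norm.const_mul (2 / z.re)
  refine Integrable.mono' h1 ?_ ?_
  · exact Complex.continuous_ofReal.aestronglyMeasurable.mul
      (integrableOn_besselKInt ha hz).aestronglyMeasurable
  · refine (ae_restrict_iff' measurableSet_Ioi).mpr (ae_of_all _ fun t ht => ?_)
    have ht0 : (0 : ℝ) < t := by have := mem_Ioi.mp ht; linarith
    rw [norm_mul, norm_mul, norm_mul, norm_exp_neg_mul_ofReal, norm_exp_neg_mul_ofReal,
      ← mul_assoc, ← mul_assoc, Complex.norm_real, Real.norm_of_nonneg ht0.le]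
    refine mul_le_mul_of_nonneg_right ?_ (norm_nonneg _)
    have h2 : (z / 2).re = z.re / 2 := by simp
    rw [h2, show -z.re * t = -(z.re / 2) * t + -(z.re / 2 * t) by ring, Real.exp_add,
      mul_comm (Real.exp _), ← mul_assoc]
    refine mul_le_mul_of_nonneg_right ?_ (Real.exp_pos _).le
    rw [Real.exp_neg, ← div_eq_mul_inv, div_le_iff₀ (Real.exp_pos _)]
    have h3 := Real.add_one_le_exp (z.re / 2 * t)
    have h4 : t = 2 / z.re * (z.re / 2 * t) := by field_simp
    calc t = 2 / z.re * (z.re / 2 * t) := h4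
      _ ≤ _ := mul_le_mul_of_nonneg_left (by linarith) (by positivity)

/-- Differentiation under the integral sign; near `z` the differentiated integrand is dominated by
its value at `z/2`. -/
lemma hasDerivAt_besselKInt {a z : ℂ} (ha : -1 < a.re) (hz : 0 < z.re) :
    HasDerivAt (besselKInt a) (-∫ t in Ioi (1 : ℝ),
      (t : ℂ) * (Complex.exp (-z * (t : ℂ)) * ((t : ℂ) ^ 2 - 1) ^ a)) z := by
  have hz2 : 0 < (z / 2).re := by simpa using hz
  have hs : {w : ℂ | z.re / 2 < w.re} ∈ nhds z :=
    (isOpen_lt continuous_const Complex.continuous_re).mem_nhds (by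
      show z.re / 2 < z.re
      linarith)
  have key := hasDerivAt_integral_of_dominated_loc_of_deriv_le (𝕜 := ℂ)
    (μ := volume.restrict (Ioi (1 : ℝ)))
    (F := fun (w : ℂ) (t : ℝ) => Complex.exp (-w * (t : ℂ)) * ((t : ℂ) ^ 2 - 1) ^ a)
    (F' := fun (w : ℂ) (t : ℝ) => -((t : ℂ) * (Complex.exp (-w * (t : ℂ)) *
      ((t : ℂ) ^ 2 - 1) ^ a)))
    (bound := fun t : ℝ => ‖(t : ℂ) * (Complex.exp (-(z / 2) * (t : ℂ)) *
      ((t : ℂ) ^ 2 - 1) ^ a)‖) hs ?_ (integrableOn_besselKInt ha hz)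
    (integrableOn_mul_besselKInt ha hz).aestronglyMeasurable.neg ?_
    (integrableOn_mul_besselKInt ha hz2).norm ?_
  · have := key.2
    rw [integral_neg] at this
    exact this
  · filter_upwards [hs] with w hw
    exact (integrableOn_besselKInt ha (lt_trans (by linarith) hw)).aestronglyMeasurable
  · refine (ae_restrict_iff' measurableSet_Ioi).mpr (ae_of_all _ fun t ht w hw => ?_)
    have ht0 : (0 : ℝ) < t := by have := mem_Ioi.mp ht; linarith
    rw [norm_neg, norm_mul, norm_mul, norm_mul, norm_mul, norm_exp_neg_mul_ofReal,
      norm_exp_neg_mul_ofReal]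
    have h2 : (z / 2).re = z.re / 2 := by simp
    have hw' : z.re / 2 < w.re := hw
    refine mul_le_mul_of_nonneg_left (mul_le_mul_of_nonneg_right (Real.exp_le_exp.mpr ?_)
      (norm_nonneg _)) (norm_nonneg _)
    rw [h2]
    nlinarith
  · refine ae_of_all _ fun t w _ => ?_
    have h1 : HasDerivAt (fun w : ℂ => -w * (t : ℂ)) (-(t : ℂ)) w := by
      simpa using (hasDerivAt_id w).neg.mul_const (t : ℂ)
    refine (h1.cexp.mul_const _).congr_deriv ?_
    ring

lemma ofReal_sq_sub_one_mem_slitPlane {t : ℝ} (ht : t ∈ Ioi (1 : ℝ)) :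
    (t : ℂ) ^ 2 - 1 ∈ Complex.slitPlane := by
  rw [show (t : ℂ) ^ 2 - 1 = ((t ^ 2 - 1 : ℝ) : ℂ) by push_cast; ring,
    Complex.ofReal_mem_slitPlane]
  have := mem_Ioi.mp ht
  nlinarith

lemma cpow_add_one_sq_sub_one (a : ℂ) {t : ℝ} (ht : t ∈ Ioi (1 : ℝ)) :
    ((t : ℂ) ^ 2 - 1) ^ (a + 1) = ((t : ℂ) ^ 2 - 1) ^ a * ((t : ℂ) ^ 2 - 1) := by
  rw [Complex.cpow_add _ _ (Complex.slitPlane_ne_zero (ofReal_sq_sub_one_mem_slitPlane ht)),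
    Complex.cpow_one]

lemma hasDerivAt_besselKInt_integrand (a z : ℂ) {t : ℝ} (ht : t ∈ Ioi (1 : ℝ)) :
    HasDerivAt (fun t : ℝ => Complex.exp (-z * (t : ℂ)) * ((t : ℂ) ^ 2 - 1) ^ (a + 1))
      (-z * (Complex.exp (-z * (t : ℂ)) * ((t : ℂ) ^ 2 - 1) ^ (a + 1)) +
        2 * (a + 1) * ((t : ℂ) * (Complex.exp (-z * (t : ℂ)) * ((t : ℂ) ^ 2 - 1) ^ a))) t := by
  have h0 : HasDerivAt (fun t : ℝ => (t : ℂ)) 1 t := Complex.ofRealCLM.hasDerivAt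
  have h1 : HasDerivAt (fun t : ℝ => -z * (t : ℂ)) (-z) t := by
    simpa using h0.const_mul (-z)
  have h2 : HasDerivAt (fun t : ℝ => (t : ℂ) ^ 2 - 1) (2 * (t : ℂ)) t := by
    simpa using (h0.pow 2).sub_const 1
  have h3 : HasDerivAt (fun u : ℂ => u ^ (a + 1)) ((a + 1) * ((t : ℂ) ^ 2 - 1) ^ a)
      ((t : ℂ) ^ 2 - 1) := by
    simpa using (hasDerivAt_id ((t : ℂ) ^ 2 - 1)).cpow_const (c := a + 1)
      (ofReal_sq_sub_one_mem_slitPlane ht)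
  refine (h1.cexp.mul (h3.comp t h2)).congr_deriv ?_
  simp only [Function.comp_apply]
  ring

lemma continuous_cpow_sq_sub_one {b : ℂ} (hb : 0 < b.re) :
    Continuous fun t : ℝ => ((t : ℂ) ^ 2 - 1) ^ b := by
  have h := (Complex.continuous_ofReal_cpow_const hb).comp
    (f := fun t : ℝ => t ^ 2 - 1) (by fun_prop)
  convert h using 2 with t
  simp

/-- Integration by parts of `d/dt (e^{-zt} (t² - 1)^(a+1))`. -/
lemma besselKInt_ibp {a z : ℂ} (ha : -1 < a.re) (hz : 0 < z.re) :
    z * besselKInt (a + 1) z = 2 * (a + 1) * ∫ t in Ioi (1 : ℝ),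
      (t : ℂ) * (Complex.exp (-z * (t : ℂ)) * ((t : ℂ) ^ 2 - 1) ^ a) := by
  have ha1 : 0 < (a + 1).re := by simp; linarith
  have i1 := integrableOn_besselKInt (a := a + 1) (by linarith) hz
  have i2 := integrableOn_mul_besselKInt ha hz
  have i3 := (i1.const_mul (-z)).add (i2.const_mul (2 * (a + 1)))
  have hd := fun t (ht : t ∈ Ioi (1 : ℝ)) => hasDerivAt_besselKInt_integrand a z ht
  have hlim := tendsto_zero_of_hasDerivAt_of_integrableOn_Ioi hd i3 i1
  have hc : Continuous fun t : ℝ =>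
      Complex.exp (-z * (t : ℂ)) * ((t : ℂ) ^ 2 - 1) ^ (a + 1) :=
    Continuous.mul (by fun_prop) (continuous_cpow_sq_sub_one ha1)
  have h := integral_Ioi_of_hasDerivAt_of_tendsto hc.continuousWithinAt hd i3 hlim
  have hne : a + 1 ≠ 0 := fun h0 => by simp [h0] at ha1
  rw [integral_add (i1.const_mul _) (i2.const_mul _), integral_const_mul, integral_const_mul] at h
  simp only [Complex.ofReal_one, one_pow, sub_self, Complex.zero_cpow hne, mul_zero] at h
  rw [besselKInt]
  linear_combination -h

/-- Integration by parts of `d/dt (t e^{-zt} (t² - 1)^(a+1))`. -/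
lemma besselKInt_ibp' {a z : ℂ} (ha : -1 < a.re) (hz : 0 < z.re) :
    z * ∫ t in Ioi (1 : ℝ), (t : ℂ) * (Complex.exp (-z * (t : ℂ)) * ((t : ℂ) ^ 2 - 1) ^ (a + 1)) =
      (2 * a + 3) * besselKInt (a + 1) z + 2 * (a + 1) * besselKInt a z := by
  have ha1 : 0 < (a + 1).re := by simp; linarith
  have i0 := integrableOn_besselKInt ha hz
  have i1 := integrableOn_besselKInt (a := a + 1) (by linarith) hz
  have i2 := integrableOn_mul_besselKInt (a := a + 1) (by linarith) hz
  have i21 : IntegrableOn (fun t : ℝ =>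
      -z * ((t : ℂ) * (Complex.exp (-z * (t : ℂ)) * ((t : ℂ) ^ 2 - 1) ^ (a + 1))) +
        (2 * a + 3) * (Complex.exp (-z * (t : ℂ)) * ((t : ℂ) ^ 2 - 1) ^ (a + 1))) (Ioi 1) :=
    (i2.const_mul (-z)).add (i1.const_mul (2 * a + 3))
  have i3 := i21.add (i0.const_mul (2 * (a + 1)))
  have hd : ∀ t ∈ Ioi (1 : ℝ), HasDerivAt
      (fun t : ℝ => (t : ℂ) * (Complex.exp (-z * (t : ℂ)) * ((t : ℂ) ^ 2 - 1) ^ (a + 1)))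
      (-z * ((t : ℂ) * (Complex.exp (-z * (t : ℂ)) * ((t : ℂ) ^ 2 - 1) ^ (a + 1))) +
        (2 * a + 3) * (Complex.exp (-z * (t : ℂ)) * ((t : ℂ) ^ 2 - 1) ^ (a + 1)) +
        2 * (a + 1) * (Complex.exp (-z * (t : ℂ)) * ((t : ℂ) ^ 2 - 1) ^ a)) t := by
    intro t ht
    have h0 : HasDerivAt (fun t : ℝ => (t : ℂ)) 1 t := Complex.ofRealCLM.hasDerivAt
    refine (h0.mul (hasDerivAt_besselKInt_integrand a z ht)).congr_deriv ?_
    rw [cpow_add_one_sq_sub_one a ht]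
    ring
  have hlim := tendsto_zero_of_hasDerivAt_of_integrableOn_Ioi hd i3 i2
  have hc : Continuous fun t : ℝ =>
      (t : ℂ) * (Complex.exp (-z * (t : ℂ)) * ((t : ℂ) ^ 2 - 1) ^ (a + 1)) :=
    Continuous.mul (by fun_prop) (Continuous.mul (by fun_prop) (continuous_cpow_sq_sub_one ha1))
  have h := integral_Ioi_of_hasDerivAt_of_tendsto hc.continuousWithinAt hd i3 hlim
  have hne : a + 1 ≠ 0 := fun h0 => by simp [h0] at ha1
  rw [integral_add i21 (i0.const_mul _),
    integral_add (i2.const_mul _) (i1.const_mul _), integral_const_mul, integral_const_mul,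
    integral_const_mul] at h
  simp only [Complex.ofReal_one, one_pow, sub_self, Complex.zero_cpow hne, mul_zero] at h
  rw [besselKInt, besselKInt]
  linear_combination -h

/-! ### Uniqueness for the singular first-order system -/

/-- A linear system `f' = x^{-c} p`, `p' = x^c f` on `x > 0`, whose coefficients are integrable
at `0` because `0 < c < 1`, has no nonzero solution vanishing at `0⁺`: by Grönwall,
`(‖f‖² + ‖p‖²) exp(-∫₀ˣ (s^c + s^{-c}) ds)` is antitone. -/
lemma eq_zero_of_singular_system {c : ℝ} (hc0 : 0 < c) (hc1 : c < 1) {f p : ℝ → ℂ}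
    (hf : ∀ x, 0 < x → HasDerivAt f (x ^ (-c) • p x) x)
    (hp : ∀ x, 0 < x → HasDerivAt p (x ^ c • f x) x)
    (hf0 : Tendsto f (nhdsWithin 0 (Ioi 0)) (nhds 0))
    (hp0 : Tendsto p (nhdsWithin 0 (Ioi 0)) (nhds 0)) {x : ℝ} (hx : 0 < x) : f x = 0 := by
  set E : ℝ → ℝ := fun x => ‖f x‖ ^ 2 + ‖p x‖ ^ 2 with hE
  set A : ℝ → ℝ := fun x => x ^ (c + 1) / (c + 1) + x ^ (-c + 1) / (-c + 1) with hA
  set G : ℝ → ℝ := fun x => E x * Real.exp (-A x) with hG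
  have hEd : ∀ x, 0 < x → HasDerivAt E
      (2 * inner ℝ (f x) (x ^ (-c) • p x) + 2 * inner ℝ (p x) (x ^ c • f x)) x :=
    fun x hx => (hf x hx).norm_sq.add (hp x hx).norm_sq
  have hAd : ∀ x, 0 < x → HasDerivAt A (x ^ c + x ^ (-c)) x := by
    intro x hx
    have h1 := (Real.hasDerivAt_rpow_const (x := x) (p := c + 1) (Or.inl hx.ne')).div_const (c + 1)
    have h2 := (Real.hasDerivAt_rpow_const (x := x) (p := -c + 1)
      (Or.inl hx.ne')).div_const (-c + 1)
    refine (h1.add h2).congr_deriv ?_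
    have h3 : c + 1 ≠ 0 := by linarith
    have h4 : -c + 1 ≠ 0 := by linarith
    rw [add_sub_cancel_right, add_sub_cancel_right]
    field_simp
  have hGd : ∀ x, 0 < x → HasDerivAt G
      ((2 * inner ℝ (f x) (x ^ (-c) • p x) + 2 * inner ℝ (p x) (x ^ c • f x)) * Real.exp (-A x) +
        E x * (Real.exp (-A x) * -(x ^ c + x ^ (-c)))) x :=
    fun x hx => (hEd x hx).mul (hAd x hx).neg.exp
  have hanti : AntitoneOn G (Ioi 0) := by
    refine antitoneOn_of_deriv_nonpos (convex_Ioi 0)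
      (fun x hx => (hGd x hx).continuousAt.continuousWithinAt)
      (fun x hx => (hGd x (interior_subset hx)).differentiableAt.differentiableWithinAt) ?_
    intro x hx
    have hx : 0 < x := interior_subset hx
    rw [(hGd x hx).deriv, real_inner_smul_right, real_inner_smul_right, real_inner_comm (f x) (p x)]
    have h1 : 2 * inner ℝ (f x) (p x) ≤ E x := by
      have := real_inner_le_norm (f x) (p x)
      have h2 := sq_nonneg (‖f x‖ - ‖p x‖)
      simp only [hE]
      nlinarith
    have h2 : 0 ≤ Real.exp (-A x) * (x ^ c + x ^ (-c)) := by positivity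
    nlinarith [mul_le_mul_of_nonneg_left h1 h2]
  have hE0 : Tendsto E (nhdsWithin 0 (Ioi 0)) (nhds 0) := by
    simpa using (hf0.norm.pow 2).add (hp0.norm.pow 2)
  have hEnn : ∀ x, 0 ≤ E x := fun x => by positivity
  have hG0 : Tendsto G (nhdsWithin 0 (Ioi 0)) (nhds 0) := by
    refine tendsto_of_tendsto_of_tendsto_of_le_of_le' tendsto_const_nhds hE0
      (Eventually.of_forall fun x => mul_nonneg (hEnn x) (Real.exp_pos _).le) ?_
    filter_upwards [self_mem_nhdsWithin] with y hy
    have hy : 0 < y := hy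
    have hA0 : 0 ≤ A y := by
      have : 0 < -c + 1 := by linarith
      simp only [hA]; positivity
    exact mul_le_of_le_one_right (hEnn y) (Real.exp_le_one_iff.mpr (by linarith))
  have hGx : G x ≤ 0 := by
    refine ge_of_tendsto hG0 ?_
    filter_upwards [Ioo_mem_nhdsGT hx] with y hy
    exact hanti hy.1 hx hy.2.le
  have hEx : E x ≤ 0 := by
    by_contra! h
    exact absurd (mul_pos h (Real.exp_pos (-A x))) (not_lt.mpr hGx)
  have : ‖f x‖ ^ 2 = 0 := by
    have h1 := sq_nonneg ‖f x‖
    have h2 := sq_nonneg ‖p x‖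
    simp only [hE] at hEx
    linarith
  simpa using this

/-! ### Limits at the origin -/

lemma image_inv_sq : (fun t : ℝ => (t ^ 2)⁻¹) '' Ioi 1 = Ioo 0 1 := by
  ext u
  simp only [mem_image, mem_Ioi, mem_Ioo]
  constructor
  · rintro ⟨t, ht, rfl⟩
    exact ⟨by positivity, inv_lt_one_of_one_lt₀ (by nlinarith)⟩
  · rintro ⟨hu0, hu1⟩
    refine ⟨√(u⁻¹), ?_, ?_⟩
    · rw [Real.lt_sqrt one_pos.le, one_pow]
      exact (one_lt_inv₀ hu0).mpr hu1
    · rw [Real.sq_sqrt (by positivity), inv_inv]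

lemma injOn_inv_sq : InjOn (fun t : ℝ => (t ^ 2)⁻¹) (Ioi 1) := by
  intro a ha b hb h
  simp only [mem_Ioi] at ha hb
  have h' : a ^ 2 = b ^ 2 := inv_injective h
  exact (sq_eq_sq₀ (by linarith) (by linarith)).mp h'

lemma hasDerivWithinAt_inv_sq (t : ℝ) (ht : t ∈ Ioi (1 : ℝ)) :
    HasDerivWithinAt (fun t : ℝ => (t ^ 2)⁻¹) (-2 * (t ^ 3)⁻¹) (Ioi 1) t := by
  have ht0 : t ≠ 0 := by have := mem_Ioi.mp ht; linarith
  have h := (((hasDerivAt_id t).pow 2).inv (pow_ne_zero 2 ht0)).hasDerivWithinAt (s := Ioi 1)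
  refine h.congr_deriv ?_
  simp
  field_simp

lemma betaIntegrand_subst (a : ℂ) {t : ℝ} (ht : t ∈ Ioi (1 : ℝ)) :
    |-2 * (t ^ 3)⁻¹| • ((((t ^ 2)⁻¹ : ℝ) : ℂ) ^ (-a - 1 / 2 - 1) *
      (1 - (((t ^ 2)⁻¹ : ℝ) : ℂ)) ^ (a + 1 - 1)) = 2 * ((t : ℂ) ^ 2 - 1) ^ a := by
  have ht1 : (1 : ℝ) < t := ht
  have ht0 : (0 : ℝ) < t := by linarith
  have h1 : (1 - (((t ^ 2)⁻¹ : ℝ) : ℂ)) = ((t ^ 2 - 1 : ℝ) : ℂ) * (((t ^ 2)⁻¹ : ℝ) : ℂ) := by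
    norm_cast
    field_simp
  have hne : (((t ^ 2)⁻¹ : ℝ) : ℂ) ≠ 0 := by exact_mod_cast (by positivity)
  have h2 : (((t ^ 2)⁻¹ : ℝ) : ℂ) ^ (-a - 1 / 2 - 1) * (((t ^ 2)⁻¹ : ℝ) : ℂ) ^ a =
      ((t ^ 3 : ℝ) : ℂ) := by
    rw [← Complex.cpow_add _ _ hne, show -a - 1 / 2 - 1 + a = ((-(3 / 2) : ℝ) : ℂ) by
      push_cast; ring, ← Complex.ofReal_cpow (by positivity)]
    congr 1
    rw [Real.inv_rpow (by positivity), Real.rpow_neg (by positivity), inv_inv,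
      ← Real.rpow_natCast, ← Real.rpow_mul ht0.le, ← Real.rpow_natCast]
    norm_num
  rw [add_sub_cancel_right, h1, Complex.mul_cpow_ofReal_nonneg (by nlinarith) (by positivity),
    mul_left_comm, h2, abs_mul, abs_of_pos (a := (t ^ 3)⁻¹) (by positivity), Complex.real_smul]
  have : (t : ℂ) ≠ 0 := by exact_mod_cast ht0.ne'
  push_cast
  norm_num
  field_simp

lemma integrableOn_sq_sub_one_cpow {a : ℂ} (ha : -1 < a.re) (ha' : a.re < -1 / 2) :
    IntegrableOn (fun t : ℝ => ((t : ℂ) ^ 2 - 1) ^ a) (Ioi 1) := by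
  have h := Complex.betaIntegral_convergent (u := -a - 1 / 2) (v := a + 1)
    (by simp; linarith) (by simp; linarith)
  rw [intervalIntegrable_iff_integrableOn_Ioo_of_le zero_le_one, ← image_inv_sq,
    integrableOn_image_iff_integrableOn_abs_deriv_smul
    measurableSet_Ioi hasDerivWithinAt_inv_sq injOn_inv_sq] at h
  have h2 := (h.congr_fun (fun t ht => betaIntegrand_subst a ht) measurableSet_Ioi).const_mul
    (1 / 2 : ℂ)
  simpa [IntegrableOn] using h2

lemma integral_sq_sub_one_cpow (a : ℂ) :
    ∫ t in Ioi (1 : ℝ), ((t : ℂ) ^ 2 - 1) ^ a =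
      1 / 2 * Complex.betaIntegral (-a - 1 / 2) (a + 1) := by
  rw [Complex.betaIntegral, intervalIntegral.integral_of_le zero_le_one,
    integral_Ioc_eq_integral_Ioo, ← image_inv_sq, integral_image_eq_integral_abs_deriv_smul
    measurableSet_Ioi hasDerivWithinAt_inv_sq injOn_inv_sq,
    setIntegral_congr_fun measurableSet_Ioi fun t ht => betaIntegrand_subst a ht,
    integral_const_mul]
  ring

/-- The limit is `J(a, 0)`, a Beta integral through `v = t⁻²`, which converges for
`-1 < Re a < -1/2`. -/
lemma tendsto_besselKInt_zero {a : ℂ} (ha : -1 < a.re) (ha' : a.re < -1 / 2) :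
    Tendsto (fun x : ℝ => besselKInt a x) (nhdsWithin 0 (Ioi 0))
      (nhds (Complex.Gamma (-a - 1 / 2) * Complex.Gamma (a + 1) / (2 * (√π : ℝ)))) := by
  have hval : Complex.Gamma (-a - 1 / 2) * Complex.Gamma (a + 1) / (2 * (√π : ℝ)) =
      ∫ t in Ioi (1 : ℝ), ((t : ℂ) ^ 2 - 1) ^ a := by
    rw [integral_sq_sub_one_cpow, Complex.Gamma_mul_Gamma_eq_betaIntegral (by simp; linarith)
      (by simp; linarith), show -a - 1 / 2 + (a + 1) = 1 / 2 by ring, Complex.Gamma_one_half_eq]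
    have h : (√π : ℝ) ≠ 0 := (Real.sqrt_pos.mpr Real.pi_pos).ne'
    have h2 : ((√π : ℝ) : ℂ) ≠ 0 := by exact_mod_cast h
    have h3 : (π : ℂ) ^ (1 / 2 : ℂ) = ((√π : ℝ) : ℂ) := by
      rw [Real.sqrt_eq_rpow, Complex.ofReal_cpow Real.pi_pos.le]
      norm_num
    rw [h3]
    field_simp
  rw [hval]
  have hi := integrableOn_sq_sub_one_cpow ha ha'
  refine tendsto_integral_filter_of_dominated_convergence (fun t => ‖((t : ℂ) ^ 2 - 1) ^ a‖)
    (Eventually.of_forall fun x => ?_) ?_ hi.norm (ae_of_all _ fun t => ?_)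
  · exact (Continuous.aestronglyMeasurable (by fun_prop)).mul hi.aestronglyMeasurable
  · filter_upwards [self_mem_nhdsWithin] with x hx
    refine (ae_restrict_iff' measurableSet_Ioi).mpr (ae_of_all _ fun t ht => ?_)
    have hx : 0 < x := hx
    have ht : 1 < t := ht
    rw [norm_mul, norm_exp_neg_mul_ofReal]
    refine mul_le_of_le_one_left (norm_nonneg _) (Real.exp_le_one_iff.mpr ?_)
    rw [Complex.ofReal_re]
    nlinarith
  · have hc : Continuous fun x : ℝ => Complex.exp (-(x : ℂ) * t) * ((t : ℂ) ^ 2 - 1) ^ a := by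
      fun_prop
    have := (hc.tendsto 0).mono_left (nhdsWithin_le_nhds (s := Ioi 0))
    simpa using this

/-- After the substitution `s = x t` the left-hand side is `∫ₓ^∞ e^{-s} (s² - x²)^b ds`. -/
lemma rpow_mul_besselKInt_eq {b : ℝ} {x : ℝ} (hx : 0 < x) :
    ((x ^ (2 * b + 1) : ℝ) : ℂ) * besselKInt b x =
      ((∫ s in Ioi (0 : ℝ), (Ioi x).indicator
        (fun s => Real.exp (-s) * (s ^ 2 - x ^ 2) ^ b) s : ℝ) : ℂ) := by
  have h1 : besselKInt b x =
      ((∫ t in Ioi (1 : ℝ), Real.exp (-x * t) * (t ^ 2 - 1) ^ b : ℝ) : ℂ) := by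
    rw [besselKInt, ← integral_complex_ofReal]
    refine setIntegral_congr_fun measurableSet_Ioi fun t ht => ?_
    have ht : 1 < t := ht
    have : 0 ≤ t ^ 2 - 1 := by nlinarith
    simp only [Complex.ofReal_mul, Complex.ofReal_cpow this]
    push_cast
    rfl
  have h2 := integral_comp_mul_left_Ioi (fun s => Real.exp (-s) * (s ^ 2 - x ^ 2) ^ b) 1 hx
  have h3 : ∫ t in Ioi (1 : ℝ), Real.exp (-(x * t)) * ((x * t) ^ 2 - x ^ 2) ^ b =
      x ^ (2 * b) * ∫ t in Ioi (1 : ℝ), Real.exp (-x * t) * (t ^ 2 - 1) ^ b := by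
    rw [← integral_const_mul]
    refine setIntegral_congr_fun measurableSet_Ioi fun t ht => ?_
    have ht : 1 < t := ht
    have : 0 ≤ t ^ 2 - 1 := by nlinarith
    rw [show (x * t) ^ 2 - x ^ 2 = x ^ 2 * (t ^ 2 - 1) by ring, Real.mul_rpow (by positivity) this,
      Real.rpow_mul hx.le, Real.rpow_two, neg_mul]
    ring
  rw [h3, mul_one, smul_eq_mul] at h2
  rw [h1, ← Complex.ofReal_mul, setIntegral_indicator measurableSet_Ioi, Ioi_inter_Ioi,
    sup_of_le_right hx.le, Real.rpow_add hx, Real.rpow_one, mul_right_comm, h2]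
  congr 1
  field_simp

lemma tendsto_rpow_mul_besselKInt {b : ℝ} (hb : 0 < b) :
    Tendsto (fun x : ℝ => ((x ^ (2 * b + 1) : ℝ) : ℂ) * besselKInt b x) (nhdsWithin 0 (Ioi 0))
      (nhds (Complex.Gamma (2 * b + 1))) := by
  have hval : Complex.Gamma (2 * b + 1) =
      ((∫ s in Ioi (0 : ℝ), Real.exp (-s) * s ^ (2 * b) : ℝ) : ℂ) := by
    have h := Real.Gamma_eq_integral (s := 2 * b + 1) (by linarith)
    rw [add_sub_cancel_right] at h
    rw [← h, ← Complex.Gamma_ofReal]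
    push_cast
    rfl
  have hi := Real.GammaIntegral_convergent (s := 2 * b + 1) (by linarith)
  rw [add_sub_cancel_right] at hi
  rw [hval]
  have hr : Tendsto (fun x : ℝ => ∫ s in Ioi (0 : ℝ), (Ioi x).indicator
        (fun s => Real.exp (-s) * (s ^ 2 - x ^ 2) ^ b) s) (nhdsWithin 0 (Ioi 0))
      (nhds (∫ s in Ioi (0 : ℝ), Real.exp (-s) * s ^ (2 * b))) := by
    refine tendsto_integral_filter_of_dominated_convergence
      (fun s => Real.exp (-s) * s ^ (2 * b)) (Eventually.of_forall fun x => ?_) ?_ hi ?_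
    · refine Measurable.aestronglyMeasurable ?_
      exact Measurable.indicator (by fun_prop) measurableSet_Ioi
    · filter_upwards [self_mem_nhdsWithin] with x hx
      refine (ae_restrict_iff' measurableSet_Ioi).mpr (ae_of_all _ fun s hs => ?_)
      have hx : 0 < x := hx
      have hs : 0 < s := hs
      by_cases hxs : x < s
      · have h0 : 0 ≤ s ^ 2 - x ^ 2 := by nlinarith
        rw [indicator_of_mem (show s ∈ Ioi x from hxs), Real.norm_of_nonneg (by positivity),
          Real.rpow_mul hs.le, Real.rpow_two]
        gcongr
        nlinarith
      · rw [indicator_of_notMem (show s ∉ Ioi x from hxs), norm_zero]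
        positivity
    · refine (ae_restrict_iff' measurableSet_Ioi).mpr (ae_of_all _ fun s hs => ?_)
      have hs : 0 < s := hs
      have hc : Continuous fun x : ℝ => Real.exp (-s) * (s ^ 2 - x ^ 2) ^ b :=
        continuous_const.mul (Continuous.rpow_const (by fun_prop) fun _ => Or.inr hb.le)
      have h := (hc.tendsto 0).mono_left (nhdsWithin_le_nhds (s := Ioi 0))
      rw [Real.rpow_mul hs.le, Real.rpow_two]
      simp only [ne_eq, OfNat.ofNat_ne_zero, not_false_eq_true, zero_pow, sub_zero] at h
      refine h.congr' ?_
      filter_upwards [Ioo_mem_nhdsGT hs] with x hx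
      rw [indicator_of_mem (show s ∈ Ioi x from hx.2)]
  refine ((Complex.continuous_ofReal.tendsto _).comp hr).congr' ?_
  filter_upwards [self_mem_nhdsWithin] with x hx
  exact (rpow_mul_besselKInt_eq hx).symm

/-! ### The connection formula for real order and argument -/

lemma hasDerivAt_besselSeries_comp (ν : ℂ) (x : ℝ) :
    HasDerivAt (fun x : ℝ => besselSeries ν ((x : ℂ) ^ 2 / 4))
      ((x : ℂ) / 2 * besselSeries (ν + 1) ((x : ℂ) ^ 2 / 4)) x := by
  have h0 : HasDerivAt (fun t : ℝ => (t : ℂ)) 1 x := Complex.ofRealCLM.hasDerivAt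
  have h1 : HasDerivAt (fun x : ℝ => (x : ℂ) ^ 2 / 4) ((x : ℂ) / 2) x := by
    refine ((h0.pow 2).div_const 4).congr_deriv ?_
    push_cast
    ring
  refine ((hasDerivAt_besselSeries ν _).comp x h1).congr_deriv ?_
  ring

lemma tendsto_besselSeries_comp_zero (ν : ℂ) :
    Tendsto (fun x : ℝ => besselSeries ν ((x : ℂ) ^ 2 / 4)) (nhdsWithin 0 (Ioi 0))
      (nhds (Complex.Gamma (ν + 1))⁻¹) := by
  have h := (hasDerivAt_besselSeries_comp ν 0).continuousAt.tendsto.mono_left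
    (nhdsWithin_le_nhds (s := Ioi 0))
  simpa [besselSeries_zero] using h

lemma hasDerivAt_ofReal_rpow {x : ℝ} (hx : 0 < x) (q : ℝ) :
    HasDerivAt (fun x : ℝ => ((x ^ q : ℝ) : ℂ)) ((q * x ^ (q - 1) : ℝ) : ℂ) x :=
  (Real.hasDerivAt_rpow_const (Or.inl hx.ne')).ofReal_comp

lemma tendsto_ofReal_rpow_zero {q : ℝ} (hq : 0 < q) :
    Tendsto (fun x : ℝ => ((x ^ q : ℝ) : ℂ)) (nhdsWithin 0 (Ioi 0)) (nhds 0) := by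
  have hc : Continuous fun x : ℝ => ((x ^ q : ℝ) : ℂ) :=
    Complex.continuous_ofReal.comp (Real.continuous_rpow_const hq.le)
  have h := (hc.tendsto 0).mono_left (nhdsWithin_le_nhds (s := Ioi 0))
  simpa [Real.zero_rpow hq.ne'] using h

lemma hasDerivAt_besselKInt_comp {a : ℂ} (ha : -1 < a.re) {x : ℝ} (hx : 0 < x) :
    HasDerivAt (fun x : ℝ => besselKInt a x)
      (-((x : ℂ) / (2 * (a + 1))) * besselKInt (a + 1) x) x := by
  have hx' : 0 < (x : ℂ).re := by simpa using hx
  have hne : a + 1 ≠ 0 := fun h0 => by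
    have := congrArg Complex.re h0
    simp at this
    linarith
  refine (hasDerivAt_besselKInt ha hx').comp_ofReal.congr_deriv ?_
  have h := besselKInt_ibp ha hx'
  generalize (∫ t in Ioi (1 : ℝ), (t : ℂ) * (Complex.exp (-(x : ℂ) * (t : ℂ)) *
    ((t : ℂ) ^ 2 - 1) ^ a)) = Q at h ⊢
  field_simp
  linear_combination h

/-- The expansion of `J(r - 1/2, x)` in the two series solutions. Each of `J`, `S(r, x²/4)` and
`x^{-2r} S(-r, x²/4)` is the first component of a solution of the system of
`eq_zero_of_singular_system` with `c = 2r + 1`; the coefficients match the values at `0⁺`. -/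
lemma besselKInt_eq_of_real {r : ℝ} (hr : -1 / 2 < r) (hr0 : r < 0) {x : ℝ} (hx : 0 < x) :
    besselKInt (r - 1 / 2) x =
      Complex.Gamma (-r) * Complex.Gamma (r + 1 / 2) * Complex.Gamma (r + 1) / (2 * (√π : ℝ)) *
        besselSeries r ((x : ℂ) ^ 2 / 4) -
      Complex.Gamma (2 * r + 1) * Complex.Gamma (-r) / 2 *
        (((x ^ (-2 * r) : ℝ) : ℂ) * besselSeries (-r) ((x : ℂ) ^ 2 / 4)) := by
  set α : ℂ := Complex.Gamma (-r) * Complex.Gamma (r + 1 / 2) * Complex.Gamma (r + 1) /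
    (2 * (√π : ℝ)) with hα
  set β : ℂ := Complex.Gamma (2 * r + 1) * Complex.Gamma (-r) / 2 with hβ
  obtain ⟨c, hc⟩ : ∃ c : ℝ, c = 2 * r + 1 := ⟨_, rfl⟩
  have hc0 : 0 < c := by linarith
  have hcC : (c : ℂ) = 2 * r + 1 := by rw [hc]; push_cast; rfl
  have hcne : (c : ℂ) ≠ 0 := by exact_mod_cast hc0.ne'
  have ha : -1 < ((r : ℂ) - 1 / 2).re := by
    simp; linarith
  have ha' : ((r : ℂ) - 1 / 2).re < -1 / 2 := by
    simp; linarith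
  have hΓ1 : Complex.Gamma (r + 1) ≠ 0 :=
    Complex.Gamma_ne_zero_of_re_pos (by simp; linarith)
  have hΓ2 : Complex.Gamma (-r) ≠ 0 :=
    Complex.Gamma_ne_zero_of_re_pos (by simp; linarith)
  have hb : (r : ℂ) - 1 / 2 + 1 = ((r + 1 / 2 : ℝ) : ℂ) := by push_cast; ring
  suffices h : besselKInt (r - 1 / 2) x - α * besselSeries r ((x : ℂ) ^ 2 / 4) +
      β * (((x ^ (-2 * r) : ℝ) : ℂ) * besselSeries (-r) ((x : ℂ) ^ 2 / 4)) = 0 by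
    linear_combination h
  refine eq_zero_of_singular_system (c := c) hc0 (by linarith)
    (f := fun x : ℝ => besselKInt (r - 1 / 2) x - α * besselSeries r ((x : ℂ) ^ 2 / 4) +
      β * (((x ^ (-2 * r) : ℝ) : ℂ) * besselSeries (-r) ((x : ℂ) ^ 2 / 4)))
    (p := fun x : ℝ => -(1 / (c : ℂ)) * (((x ^ (c + 1) : ℝ) : ℂ) * besselKInt (r - 1 / 2 + 1) x) -
      α * (((x ^ (c + 1) : ℝ) : ℂ) * (1 / 2 * besselSeries (r + 1) ((x : ℂ) ^ 2 / 4))) +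
      β * (2 * besselSeries (-r - 1) ((x : ℂ) ^ 2 / 4))) ?_ ?_ ?_ ?_ hx
  · intro x hx
    have hxne : (x : ℂ) ≠ 0 := by exact_mod_cast hx.ne'
    have hy : ((x ^ c : ℝ) : ℂ) ≠ 0 := by exact_mod_cast (Real.rpow_pos_of_pos hx c).ne'
    have h1 := hasDerivAt_besselKInt_comp ha hx
    have h2 := (hasDerivAt_besselSeries_comp r x).const_mul α
    have h3 := ((hasDerivAt_ofReal_rpow hx (-2 * r)).mul
      (hasDerivAt_besselSeries_comp (-r) x)).const_mul β
    refine ((h1.sub h2).add h3).congr_deriv ?_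
    have hrec := besselSeries_recurrence (-r - 1) ((x : ℂ) ^ 2 / 4)
    rw [show -(r : ℂ) - 1 + 2 = -r + 1 by ring, show -(r : ℂ) - 1 + 1 = -r by ring] at hrec
    rw [← hrec, Complex.real_smul, Real.rpow_add hx, Real.rpow_one,
      show -2 * r = 1 - c by rw [hc]; ring, show 1 - c - 1 = -c by ring, Real.rpow_sub hx,
      Real.rpow_one, Real.rpow_neg hx.le, show 2 * ((r : ℂ) - 1 / 2 + 1) = c by rw [hcC]; ring]
    push_cast
    field_simp
    rw [hcC]
    ring
  · intro x hx
    have hxre : 0 < (x : ℂ).re := by simpa using hx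
    have hxne : (x : ℂ) ≠ 0 := by exact_mod_cast hx.ne'
    have hy : ((x ^ c : ℝ) : ℂ) ≠ 0 := by exact_mod_cast (Real.rpow_pos_of_pos hx c).ne'
    have hK : HasDerivAt (fun x : ℝ => besselKInt (r - 1 / 2 + 1) x) _ x :=
      (hasDerivAt_besselKInt (a := r - 1 / 2 + 1) (by simp at ha ⊢; linarith) hxre).comp_ofReal
    have h1 := ((hasDerivAt_ofReal_rpow hx (c + 1)).mul hK).const_mul (-(1 / (c : ℂ)))
    have h2 := ((hasDerivAt_ofReal_rpow hx (c + 1)).mul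
      ((hasDerivAt_besselSeries_comp (r + 1) x).const_mul (1 / 2))).const_mul α
    have h3 := ((hasDerivAt_besselSeries_comp (-r - 1) x).const_mul 2).const_mul β
    refine ((h1.sub h2).add h3).congr_deriv ?_
    have hibp := besselKInt_ibp' ha hxre
    have hrec := besselSeries_recurrence r ((x : ℂ) ^ 2 / 4)
    rw [show (2 * ((r : ℂ) - 1 / 2) + 3) = c + 1 by rw [hcC]; ring,
      show 2 * ((r : ℂ) - 1 / 2 + 1) = c by rw [hcC]; ring] at hibp
    rw [show (r : ℂ) + 1 + 1 = r + 2 by ring, show -(r : ℂ) - 1 + 1 = -r by ring, ← hrec,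
      Complex.real_smul, add_sub_cancel_right, Real.rpow_add hx, Real.rpow_one,
      show -2 * r = 1 - c by rw [hc]; ring, Real.rpow_sub hx, Real.rpow_one]
    set Q := ∫ t in Ioi (1 : ℝ), (t : ℂ) * (Complex.exp (-(x : ℂ) * (t : ℂ)) *
      ((t : ℂ) ^ 2 - 1) ^ ((r : ℂ) - 1 / 2 + 1))
    have hJ : besselKInt (r - 1 / 2) x =
        (x * Q - (c + 1) * besselKInt (r - 1 / 2 + 1) x) / c := by
      rw [eq_div_iff hcne]
      linear_combination -hibp
    rw [hJ]
    push_cast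
    field_simp
    rw [hcC]
    ring
  · have h1 := tendsto_besselKInt_zero ha ha'
    have h2 := (tendsto_besselSeries_comp_zero r).const_mul α
    have h3 := ((tendsto_ofReal_rpow_zero (q := -2 * r) (by linarith)).mul
      (tendsto_besselSeries_comp_zero (-r))).const_mul β
    convert (h1.sub h2).add h3 using 2
    rw [hα, show -((r : ℂ) - 1 / 2) - 1 / 2 = -r by ring,
      show (r : ℂ) - 1 / 2 + 1 = r + 1 / 2 by ring]
    field_simp
    ring
  · have h1 := (tendsto_rpow_mul_besselKInt (b := r + 1 / 2) (by linarith)).const_mul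
      (-(1 / (c : ℂ)))
    have h2 := ((tendsto_ofReal_rpow_zero (q := c + 1) (by linarith)).mul
      ((tendsto_besselSeries_comp_zero (r + 1)).const_mul (1 / 2))).const_mul α
    have h3 := ((tendsto_besselSeries_comp_zero (-r - 1)).const_mul 2).const_mul β
    rw [hb, show c + 1 = 2 * (r + 1 / 2) + 1 by rw [hc]; ring] at *
    convert (h1.sub h2).add h3 using 2
    rw [show (2 : ℂ) * ((r + 1 / 2 : ℝ) : ℂ) + 1 = c + 1 by rw [hcC]; push_cast; ring,
      Complex.Gamma_add_one _ hcne, hβ, ← hcC, show -(r : ℂ) - 1 + 1 = -r by ring]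
    field_simp
    ring

/-- The right-hand side `((z/2)^ν √π / Γ(ν + 1/2)) ∫₁^∞ e^{-zt} (t² - 1)^{ν - 1/2} dt` of the
integral representation. -/
noncomputable def besselKRep (ν z : ℂ) : ℂ :=
  (z / 2) ^ ν * (√π : ℝ) / Complex.Gamma (ν + 1 / 2) * besselKInt (ν - 1 / 2) z

/-- The connection formula for real order and real argument, from `besselKInt_eq_of_real` and the
reflection and duplication formulas for `Γ`. -/
lemma besselKRep_of_real {r : ℝ} (hr : -1 / 2 < r) (hr0 : r < 0) {x : ℝ} (hx : 0 < x) :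
    2 * Complex.sin (r * π) * besselKRep r x = π * (besselI (-r) x - besselI r x) := by
  have hxne : (x : ℂ) ≠ 0 := by exact_mod_cast hx.ne'
  have hrefl := Complex.Gamma_mul_Gamma_one_sub (-r)
  rw [sub_neg_eq_add, add_comm 1, show (π : ℂ) * -r = -(r * π) by ring, Complex.sin_neg] at hrefl
  have hdup := Complex.Gamma_mul_Gamma_add_half (r + 1 / 2)
  rw [show (r : ℂ) + 1 / 2 + 1 / 2 = r + 1 by ring,
    show 2 * ((r : ℂ) + 1 / 2) = 2 * r + 1 by ring,
    show 1 - (2 * (r : ℂ) + 1) = -2 * r by ring] at hdup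
  have hsin : Complex.sin (r * π) ≠ 0 := by
    have : Real.sin (r * π) < 0 :=
      Real.sin_neg_of_neg_of_neg_pi_lt (mul_neg_of_neg_of_pos hr0 Real.pi_pos)
        (by nlinarith [Real.pi_pos])
    exact_mod_cast this.ne
  have hΓ : Complex.Gamma (r + 1 / 2) ≠ 0 :=
    Complex.Gamma_ne_zero_of_re_pos (by simp; linarith)
  have hs : ((√π : ℝ) : ℂ) ≠ 0 := by exact_mod_cast (Real.sqrt_pos.mpr Real.pi_pos).ne'
  have hpow : (2 : ℂ) ^ (-2 * (r : ℂ)) * ((x : ℂ) / 2) ^ (-(r : ℂ)) =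
      ((x ^ (-2 * r) : ℝ) : ℂ) * ((x : ℂ) / 2) ^ (r : ℂ) := by
    have h2 : (2 : ℂ) ^ (-2 * (r : ℂ)) = (((2 : ℝ) ^ (-2 * r) : ℝ) : ℂ) := by
      rw [Complex.ofReal_cpow zero_le_two]; push_cast; rfl
    have h3 : ((x : ℂ) / 2) = ((x / 2 : ℝ) : ℂ) := by push_cast; rfl
    rw [h2, h3, ← Complex.ofReal_neg, ← Complex.ofReal_cpow (by positivity),
      ← Complex.ofReal_cpow (by positivity), ← Complex.ofReal_mul, ← Complex.ofReal_mul]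
    congr 1
    have hxe : x ^ (-2 * r) = 2 ^ (-2 * r) * (x / 2) ^ (-2 * r) := by
      rw [← Real.mul_rpow (by positivity) (by positivity)]
      congr 1
      ring
    rw [hxe, mul_assoc, ← Real.rpow_add (by positivity)]
    congr 2
    ring
  have h2ne : (2 : ℂ) ^ (-2 * (r : ℂ)) ≠ 0 := by simp [Complex.cpow_eq_zero_iff]
  rw [besselKRep, besselKInt_eq_of_real hr hr0 hx, besselI_eq _ hxne, besselI_eq _ hxne]
  have hΓ' : Complex.Gamma (2 * r + 1) =
      Complex.Gamma (r + 1 / 2) * Complex.Gamma (r + 1) / (2 ^ (-2 * (r : ℂ)) * (√π : ℝ)) := by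
    rw [hdup]; field_simp
  have hpow' : ((x : ℂ) / 2) ^ (-(r : ℂ)) =
      ((x ^ (-2 * r) : ℝ) : ℂ) * ((x : ℂ) / 2) ^ (r : ℂ) / (2 : ℂ) ^ (-2 * (r : ℂ)) := by
    rw [← hpow]; field_simp
  have hprod : Complex.sin (r * π) * (Complex.Gamma (-r) * Complex.Gamma (r + 1)) = -π := by
    rw [hrefl]; field_simp
  generalize besselSeries r ((x : ℂ) ^ 2 / 4) = S₁
  generalize besselSeries (-r) ((x : ℂ) ^ 2 / 4) = S₂
  calc _ = Complex.sin (r * π) * (Complex.Gamma (-r) * Complex.Gamma (r + 1)) *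
        (((x : ℂ) / 2) ^ (r : ℂ) * S₁ -
          ((x ^ (-2 * r) : ℝ) : ℂ) * ((x : ℂ) / 2) ^ (r : ℂ) / (2 : ℂ) ^ (-2 * (r : ℂ)) * S₂) := by
        rw [hΓ']
        generalize (2 : ℂ) ^ (-2 * (r : ℂ)) = T at *
        generalize Complex.Gamma (r + 1 / 2) = U at *
        field_simp
    _ = _ := by rw [hprod, ← hpow']; ring

/-! ### Analytic continuation in argument and order -/

lemma differentiableAt_besselI_arg (ν : ℂ) {z : ℂ} (hz : 0 < z.re) :
    DifferentiableAt ℂ (besselI ν) z := by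
  have hev : besselI ν =ᶠ[nhds z] fun z => (z / 2) ^ ν * besselSeries ν (z ^ 2 / 4) := by
    filter_upwards [(isOpen_lt continuous_const Complex.continuous_re).mem_nhds hz] with w hw
    exact besselI_eq ν fun h => by simp [h] at hw
  refine DifferentiableAt.congr_of_eventuallyEq ?_ hev
  refine DifferentiableAt.mul ?_ ?_
  · exact DifferentiableAt.cpow_const (by fun_prop) (Or.inl (by simpa using hz))
  · exact DifferentiableAt.comp z (f := fun z : ℂ => z ^ 2 / 4)
      (hasDerivAt_besselSeries ν _).differentiableAt (by fun_prop)

lemma differentiable_besselI_order {z : ℂ} (hz : z ≠ 0) :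
    Differentiable ℂ fun ν => besselI ν z := by
  simp_rw [besselI_eq _ hz]
  exact (Differentiable.const_cpow differentiable_id
    (Or.inl (div_ne_zero hz two_ne_zero))).mul (differentiable_besselSeries_order _)

lemma differentiableAt_besselKRep_arg {ν z : ℂ} (hν : -1 / 2 < ν.re) (hz : 0 < z.re) :
    DifferentiableAt ℂ (besselKRep ν) z := by
  unfold besselKRep
  refine DifferentiableAt.mul (DifferentiableAt.div_const (DifferentiableAt.mul_const ?_ _) _)
    (hasDerivAt_besselKInt (by simp; linarith) hz).differentiableAt
  exact DifferentiableAt.cpow_const (by fun_prop) (Or.inl (by simpa using hz))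

lemma differentiableAt_besselKRep_order {ν z : ℂ} (hν : -1 / 2 < ν.re) (hz : 0 < z.re) :
    DifferentiableAt ℂ (fun ν => besselKRep ν z) ν := by
  have hz0 : z ≠ 0 := fun h => by simp [h] at hz
  have hJ : DifferentiableAt ℂ (fun ν => besselKInt (ν - 1 / 2) z) ν :=
    (differentiableAt_besselKInt_order (a := ν - 1 / 2) (by simp; linarith) hz).comp
      (f := fun ν : ℂ => ν - 1 / 2) ν (by fun_prop)
  have hΓ : DifferentiableAt ℂ (fun ν => (Complex.Gamma (ν + 1 / 2))⁻¹) ν :=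
    (Complex.differentiable_one_div_Gamma _).comp (f := fun ν : ℂ => ν + 1 / 2) ν (by fun_prop)
  have hp : DifferentiableAt ℂ (fun ν => (z / 2) ^ ν) ν :=
    differentiableAt_id.const_cpow (Or.inl (div_ne_zero hz0 two_ne_zero))
  simp only [besselKRep, div_eq_mul_inv _ (Complex.Gamma _)]
  exact ((hp.mul_const _).mul hΓ).mul hJ

/-- Identity theorem on a half-plane, for functions agreeing on a real interval inside it. -/
lemma eq_of_eq_on_real {s l u : ℝ} (hsl : s ≤ l) (hlu : l < u) {f g : ℂ → ℂ}
    (hf : ∀ z : ℂ, s < z.re → DifferentiableAt ℂ f z)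
    (hg : ∀ z : ℂ, s < z.re → DifferentiableAt ℂ g z)
    (hfg : ∀ x : ℝ, l < x → x < u → f x = g x) {z : ℂ} (hz : s < z.re) : f z = g z := by
  have hopen : IsOpen {z : ℂ | s < z.re} := isOpen_lt continuous_const Complex.continuous_re
  have hfa : AnalyticOnNhd ℂ f {z : ℂ | s < z.re} :=
    DifferentiableOn.analyticOnNhd (fun w hw => (hf w hw).differentiableWithinAt) hopen
  have hga : AnalyticOnNhd ℂ g {z : ℂ | s < z.re} :=
    DifferentiableOn.analyticOnNhd (fun w hw => (hg w hw).differentiableWithinAt) hopen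
  have hm : (((l + u) / 2 : ℝ) : ℂ) ∈ {z : ℂ | s < z.re} := by
    rw [mem_ofPred_eq, Complex.ofReal_re]; linarith
  refine hfa.eqOn_of_preconnected_of_frequently_eq hga (convex_halfSpace_re_gt s).isPreconnected
    hm ?_ hz
  have ht : Tendsto (fun x : ℝ => (x : ℂ)) (nhdsWithin ((l + u) / 2) (Ioi ((l + u) / 2)))
      (nhdsWithin (((l + u) / 2 : ℝ) : ℂ) {(((l + u) / 2 : ℝ) : ℂ)}ᶜ) := by
    refine tendsto_nhdsWithin_iff.mpr
      ⟨(Complex.continuous_ofReal.tendsto _).mono_left nhdsWithin_le_nhds, ?_⟩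
    filter_upwards [self_mem_nhdsWithin] with x hx
    simp only [mem_compl_iff, mem_singleton_iff, Complex.ofReal_inj]
    exact ne_of_gt hx
  refine ht.frequently (Eventually.frequently ?_)
  filter_upwards [Ioo_mem_nhdsGT (show (l + u) / 2 < u by linarith)] with x hx
  exact hfg x (by linarith [hx.1]) hx.2

/-- The connection formula, extended from real order and argument by the identity theorem, first
in the argument and then in the order. -/
lemma besselKRep_connection {ν z : ℂ} (hν : -1 / 2 < ν.re) (hz : 0 < z.re) :
    2 * Complex.sin (ν * π) * besselKRep ν z = π * (besselI (-ν) z - besselI ν z) := by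
  have hz0 : z ≠ 0 := fun h => by simp [h] at hz
  refine eq_of_eq_on_real (s := -1 / 2) (l := -1 / 2) (u := 0) le_rfl (by norm_num)
    (f := fun ν => 2 * Complex.sin (ν * π) * besselKRep ν z)
    (g := fun ν => π * (besselI (-ν) z - besselI ν z)) ?_ ?_ ?_ hν
  · intro μ hμ
    exact DifferentiableAt.mul (by fun_prop) (differentiableAt_besselKRep_order hμ hz)
  · intro μ _
    have h1 : DifferentiableAt ℂ (fun μ => besselI (-μ) z) μ :=
      (differentiable_besselI_order hz0 (-μ)).comp (f := fun μ : ℂ => -μ) μ (by fun_prop)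
    exact (h1.sub (differentiable_besselI_order hz0 μ)).const_mul _
  · intro r hr hr0
    refine eq_of_eq_on_real (s := 0) (l := 0) (u := 1) le_rfl one_pos
      (f := fun z => 2 * Complex.sin (r * π) * besselKRep r z)
      (g := fun z => π * (besselI (-r) z - besselI r z)) ?_ ?_ ?_ hz
    · intro w hw
      exact (differentiableAt_besselKRep_arg (by simpa using hr) hw).const_mul _
    · intro w hw
      exact ((differentiableAt_besselI_arg _ hw).sub (differentiableAt_besselI_arg _ hw)).const_mul _
    · intro x hx _
      exact besselKRep_of_real hr hr0 hx

/-! ### Non-integer and integer orders -/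

lemma sin_mul_pi_ne_zero {ν : ℂ} (h : ¬ ∃ n : ℤ, ν = n) : Complex.sin (ν * π) ≠ 0 := by
  intro h0
  obtain ⟨k, hk⟩ := Complex.sin_eq_zero_iff.mp h0
  exact h ⟨k, mul_right_cancel₀ (by exact_mod_cast Real.pi_ne_zero) hk⟩

lemma besselKRep_eq_div {ν z : ℂ} (hν : -1 / 2 < ν.re) (hz : 0 < z.re)
    (h : Complex.sin (ν * π) ≠ 0) :
    (π : ℂ) / (2 * Complex.sin (ν * π)) * (besselI (-ν) z - besselI ν z) = besselKRep ν z := by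
  rw [div_mul_eq_mul_div, ← besselKRep_connection hν hz]
  exact mul_div_cancel_left₀ _ (mul_ne_zero two_ne_zero h)

lemma besselK_eq_besselKRep {ν z : ℂ} (hν : -1 / 2 < ν.re) (hz : 0 < z.re) :
    besselK ν z = besselKRep ν z := by
  rw [besselK]
  split_ifs with h
  · refine Tendsto.limUnder_eq ?_
    have hc : Tendsto (fun μ => besselKRep μ z) (nhdsWithin ν {ν}ᶜ) (nhds (besselKRep ν z)) :=
      (differentiableAt_besselKRep_order hν hz).continuousAt.tendsto.mono_left nhdsWithin_le_nhds
    refine hc.congr' ?_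
    -- The zero of `sin (μπ)` at the integer `ν` is isolated.
    have hsin : ∀ᶠ μ in nhdsWithin ν {ν}ᶜ, Complex.sin (μ * π) ≠ 0 := by
      obtain ⟨n, rfl⟩ := h
      filter_upwards [self_mem_nhdsWithin, nhdsWithin_le_nhds (Metric.ball_mem_nhds (n : ℂ) one_pos)]
        with μ hμ hball
      refine sin_mul_pi_ne_zero ?_
      rintro ⟨k, rfl⟩
      rw [Metric.mem_ball, dist_eq_norm, ← Int.cast_sub, Complex.norm_intCast] at hball
      have hk : |k - n| < 1 := by exact_mod_cast hball
      rw [Int.abs_lt_one_iff, sub_eq_zero] at hk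
      exact hμ (by simp [hk])
    filter_upwards [hsin, nhdsWithin_le_nhds
      ((isOpen_lt continuous_const Complex.continuous_re).mem_nhds hν)] with μ hμ hμν
    exact (besselKRep_eq_div hμν hz hμ).symm
  · exact besselKRep_eq_div hν hz (sin_mul_pi_ne_zero h)

/-! ### The hyperbolic form of the integral -/

lemma image_cosh : Real.cosh '' Ioi 0 = Ioi 1 := by
  ext t
  simp only [mem_image, mem_Ioi]
  constructor
  · rintro ⟨φ, hφ, rfl⟩
    exact Real.one_lt_cosh.mpr hφ.ne'
  · intro ht
    exact ⟨Real.arcosh t, Real.arcosh_pos ht, Real.cosh_arcosh ht.le⟩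

/-- The substitution `t = cosh φ`. -/
lemma besselKInt_eq_integral_cosh (ν z : ℂ) : besselKInt (ν - 1 / 2) z =
    ∫ φ in Ioi (0 : ℝ), Complex.exp (-z * (Real.cosh φ : ℂ)) * (Real.sinh φ : ℂ) ^ (2 * ν) := by
  rw [besselKInt, ← image_cosh, integral_image_eq_integral_abs_deriv_smul measurableSet_Ioi
    (fun φ _ => (Real.hasDerivAt_cosh φ).hasDerivWithinAt)
    (Real.cosh_strictMonoOn.injOn.mono Ioi_subset_Ici_self)]
  refine setIntegral_congr_fun measurableSet_Ioi fun φ hφ => ?_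
  have hs : 0 < Real.sinh φ := Real.sinh_pos_iff.mpr hφ
  have hsne : (Real.sinh φ : ℂ) ≠ 0 := by exact_mod_cast hs.ne'
  have h1 : (Real.cosh φ : ℂ) ^ 2 - 1 = ((Real.sinh φ * Real.sinh φ : ℝ) : ℂ) := by
    have := Real.cosh_sq φ
    norm_cast
    rw [this]
    ring
  have h2 : (Real.sinh φ : ℂ) ^ (2 * ν) =
      Real.sinh φ * ((Real.sinh φ : ℂ) ^ (ν - 1 / 2) * (Real.sinh φ : ℂ) ^ (ν - 1 / 2)) := by
    rw [← Complex.cpow_add _ _ hsne, show 2 * ν = 1 + (ν - 1 / 2 + (ν - 1 / 2)) by ring,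
      Complex.cpow_add _ _ hsne, Complex.cpow_one]
  rw [abs_of_pos hs, Complex.real_smul, h1, Complex.ofReal_mul,
    Complex.mul_cpow_ofReal_nonneg hs.le hs.le, h2]
  ring

/-- For `Re ν > -1/2` and `Re z > 0`,
`K_ν(z) = ((z/2)^ν √π / Γ(ν+1/2)) ∫₀^∞ e^{-z cosh φ} (sinh φ)^{2ν} dφ`
and equivalently
`K_ν(z) = ((z/2)^ν √π / Γ(ν+1/2)) ∫₁^∞ e^{-zt} (t²-1)^{ν-1/2} dt`. -/
theorem besselK_integral_rep (ν z : ℂ) (hν : -1/2 < ν.re) (hz : 0 < z.re) :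
    besselK ν z = ((z / 2) ^ ν * (Real.sqrt Real.pi : ℂ) / Complex.Gamma (ν + 1/2)) *
      ∫ φ in Set.Ioi (0 : ℝ), Complex.exp (-z * (Real.cosh φ : ℂ)) *
        ((Real.sinh φ : ℂ) ^ (2 * ν)) ∧
    besselK ν z = ((z / 2) ^ ν * (Real.sqrt Real.pi : ℂ) / Complex.Gamma (ν + 1/2)) *
      ∫ t in Set.Ioi (1 : ℝ), Complex.exp (-z * (t : ℂ)) * (((t : ℂ) ^ 2 - 1) ^ (ν - 1/2)) := by
  have h := besselK_eq_besselKRep hν hz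
  rw [besselKRep] at h
  exact ⟨by rw [h, besselKInt_eq_integral_cosh], h⟩
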